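/- Let d be a positive integer, ν₁, …, ν_d real numbers with ν_j > −1 for each j, set ν = ν₁ + ⋯ + ν_d, let λ be a complex number with Re(λ) + ν > −1 and Re(λ) < d/2 − 1, let a₁, …, a_d > 0 be real and set p = a₁ + ⋯ + a_d. Then ∫₀^∞ e^{−px} x^λ ∏_{j=1}^d I_{ν_j}(a_j x) dx = (Γ(λ+ν+1)/(2^ν p^{λ+ν+1})) · (∏_{j=1}^d a_j^{ν_j}/Γ(ν_j+1)) · ∑_{n₁≥0} ⋯ ∑_{n_d≥0} ((λ+ν+1)/2)_{n₁+⋯+n_d} ((λ+ν)/2+1)_{n₁+⋯+n_d} / ((ν₁+1)_{n₁} ⋯ (ν_d+1)_{n_d}) · ∏_{j=1}^d (a_j²/p²)^{n_j}/(n_j!), and the integral converges absolutely. -/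

import Mathlib

/-!
Expand every Bessel function in its power series and integrate term by term: each term is a Gamma
integral, and splitting `(s)_{2N} = 4^N (s/2)_N ((s+1)/2)_N` turns the result into the Lauricella
series. The terms of the expansion are positive up to the common factor `e^{-px} x^λ`, so the
exchange of sum and integral only needs the integrand itself to be integrable. Near `0` this holds
because `I_ν(ax) = O(x^ν)`. At infinity it comes from `I_ν(ax) = O(e^{ax} x^{-1/2})`: on the
boundary `p = ∑ a_j` the exponentials cancel and leave `x^{Re λ - d/2}`.
-/

open MeasureTheory Real Finset Complex

/-- The modified Bessel function of the first kind of real order `ν`,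
`I_ν(x) = ∑_{k ≥ 0} (x/2)^{ν+2k} / (k! Γ(ν+k+1))` (for `x > 0`). -/
noncomputable def besselI (ν x : ℝ) : ℝ :=
  ∑' k : ℕ, (x / 2) ^ (ν + 2 * (k : ℝ)) / ((k.factorial : ℝ) * Real.Gamma (ν + k + 1))

lemma eval_ascPochhammer_two_mul {𝕜 : Type*} [Field 𝕜] [NeZero (2 : 𝕜)] (s : 𝕜) (n : ℕ) :
    (ascPochhammer 𝕜 (2 * n)).eval s =
      4 ^ n * ((ascPochhammer 𝕜 n).eval (s / 2) * (ascPochhammer 𝕜 n).eval ((s + 1) / 2)) := by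
  have h2 : (2 : 𝕜) ≠ 0 := two_ne_zero
  induction n with
  | zero => simp
  | succ n ih =>
    simp only [mul_add_one, ascPochhammer_succ_eval, ih, Nat.cast_mul, Nat.cast_add, Nat.cast_ofNat,
      Nat.cast_one]
    field_simp
    ring

lemma ofReal_eval_ascPochhammer (x : ℝ) (n : ℕ) :
    (((ascPochhammer ℝ n).eval x : ℝ) : ℂ) = (ascPochhammer ℂ n).eval (x : ℂ) := by
  rw [← ascPochhammer_map Complex.ofRealHom, Polynomial.eval_map]
  exact (Polynomial.eval₂_at_apply Complex.ofRealHom x).symm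

lemma Gamma_add_natCast_eq_mul_ascPochhammer {s : ℂ} (hs : 0 < s.re) (n : ℕ) :
    Complex.Gamma (s + n) = Complex.Gamma s * (ascPochhammer ℂ n).eval s := by
  have hs' (k : ℕ) : s ≠ -k := by
    rintro rfl
    exact hs.not_ge (by simp)
  rw [← Complex.Gamma_add_nat_div_Gamma_eq s hs',
    mul_div_cancel₀ _ (Complex.Gamma_ne_zero_of_re_pos hs)]

lemma integral_cpow_add_natCast_mul_exp_neg_mul_Ioi {s : ℂ} {p : ℝ} (hs : 0 < s.re) (hp : 0 < p)
    (m : ℕ) :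
    ∫ x in Set.Ioi (0 : ℝ), (x : ℂ) ^ (s + m - 1) * Complex.exp (-(p * x)) =
      Complex.Gamma s / (p : ℂ) ^ s * ((ascPochhammer ℂ m).eval s / (p : ℂ) ^ m) := by
  have hsm : 0 < (s + m).re := by
    rw [Complex.add_re, Complex.natCast_re]
    positivity
  have hp' : (p : ℂ) ≠ 0 := Complex.ofReal_ne_zero.mpr hp.ne'
  have harg : (p : ℂ).arg ≠ π := by
    rw [Complex.arg_ofReal_of_nonneg hp.le]
    exact Real.pi_pos.ne
  rw [Complex.integral_cpow_mul_exp_neg_mul_Ioi hsm hp, one_div, Complex.inv_cpow _ _ harg,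
    Complex.cpow_add _ _ hp', Complex.cpow_natCast, Gamma_add_natCast_eq_mul_ascPochhammer hs]
  field_simp

lemma rpow_mul_exp_neg_le {s t u : ℝ} (ht : 0 < t) (hu : 0 < u)
    (hside : s ≤ t ∧ u ≤ t ∨ t ≤ s ∧ t ≤ u) (hnear : (u - t) ^ 2 ≤ u) :
    t ^ s * Real.exp (-t) ≤ Real.exp 1 * (u ^ s * Real.exp (-u)) := by
  have hlog : t * Real.log (u / t) ≤ s * Real.log (u / t) := by
    rcases hside with ⟨hst, hut⟩ | ⟨hts, htu⟩
    · exact mul_le_mul_of_nonpos_right hst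
        (Real.log_nonpos (by positivity) ((div_le_one ht).mpr hut))
    · exact mul_le_mul_of_nonneg_right hts (Real.log_nonneg ((one_le_div ht).mpr htu))
  have hquad : u - t - 1 ≤ t * Real.log (u / t) := by
    have h := mul_le_mul_of_nonneg_left (Real.one_sub_inv_le_log_of_pos (div_pos hu ht)) ht.le
    refine le_trans ?_ h
    rw [inv_div, ← sub_nonneg]
    have : t * (1 - t / u) - (u - t - 1) = (u - (u - t) ^ 2) / u := by field_simp; ring
    rw [this]
    exact div_nonneg (sub_nonneg.mpr hnear) hu.le
  rw [Real.log_div hu.ne' ht.ne'] at hlog hquad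
  rw [Real.rpow_def_of_pos ht, Real.rpow_def_of_pos hu, ← Real.exp_add, ← Real.exp_add,
    ← Real.exp_add, Real.exp_le_exp]
  linarith

lemma exists_pos_sq_add_self_le {b : ℝ} (hb : 0 < b) : ∃ w : ℝ, 0 < w ∧ w ^ 2 + w ≤ b := by
  refine ⟨min 1 (b / 2), by positivity, ?_⟩
  nlinarith [min_le_left 1 (b / 2), min_le_right 1 (b / 2), lt_min one_pos (half_pos hb)]

/-- The mass of the Gamma integral on an interval of length `w` adjacent to `t`, on the side of `s`,
where the integrand `u ^ s * exp (-u)` has its maximum. -/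
lemma mul_rpow_mul_exp_neg_le_Gamma {s t w : ℝ} (hs : -1 < s) (hw : 0 < w) (hwt : w ^ 2 + w ≤ t) :
    w * (t ^ s * Real.exp (-t)) ≤ Real.exp 1 * Real.Gamma (s + 1) := by
  have hw2 : 0 < w ^ 2 := by positivity
  obtain ⟨c, hc, hcw⟩ : ∃ c, w ^ 2 ≤ c ∧ ∀ u ∈ Set.Icc c (c + w),
      (s ≤ t ∧ u ≤ t ∨ t ≤ s ∧ t ≤ u) ∧ (u - t) ^ 2 ≤ w ^ 2 := by
    rcases le_total s t with hst | hts
    · exact ⟨t - w, by linarith, fun u ⟨_, _⟩ =>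
        ⟨.inl ⟨hst, by linarith⟩, sq_le_sq' (by linarith) (by linarith)⟩⟩
    · exact ⟨t, by linarith, fun u ⟨_, _⟩ =>
        ⟨.inr ⟨hts, by linarith⟩, sq_le_sq' (by linarith) (by linarith)⟩⟩
  have hint : IntegrableOn (fun u => Real.exp 1 * (Real.exp (-u) * u ^ (s + 1 - 1))) (Set.Ioi 0) :=
    (Real.GammaIntegral_convergent (by linarith)).const_mul _
  have hsub : Set.Icc c (c + w) ⊆ Set.Ioi 0 := fun u hu => (hw2.trans_le hc).trans_le hu.1
  calc w * (t ^ s * Real.exp (-t))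
    _ = volume.real (Set.Icc c (c + w)) * (t ^ s * Real.exp (-t)) := by simp [hw.le]
    _ ≤ ∫ u in Set.Icc c (c + w), Real.exp 1 * (Real.exp (-u) * u ^ (s + 1 - 1)) := by
        rw [mul_comm]
        refine setIntegral_ge_of_const_le_real measurableSet_Icc (by simp) (fun u hu => ?_)
          (hint.mono_set hsub)
        rw [add_sub_cancel_right, mul_comm (Real.exp (-u))]
        exact rpow_mul_exp_neg_le (by linarith) (hsub hu) (hcw u hu).1
          ((hcw u hu).2.trans (hc.trans hu.1))
    _ ≤ ∫ u in Set.Ioi 0, Real.exp 1 * (Real.exp (-u) * u ^ (s + 1 - 1)) := by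
        refine setIntegral_mono_set hint ?_ hsub.eventuallyLE
        refine (ae_restrict_mem measurableSet_Ioi).mono fun u hu => ?_
        have : 0 ≤ u ^ (s + 1 - 1) := Real.rpow_nonneg (le_of_lt hu) _
        positivity
    _ = Real.exp 1 * Real.Gamma (s + 1) := by
        rw [integral_const_mul, ← Real.Gamma_eq_integral (by linarith)]

/-- The `k`-th term of the power series of `I_ν(x)`. -/
noncomputable def besselITerm (ν x : ℝ) (k : ℕ) : ℝ :=
  (x / 2) ^ (ν + 2 * (k : ℝ)) / ((k.factorial : ℝ) * Real.Gamma (ν + k + 1))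

lemma besselI_eq_tsum (ν x : ℝ) : besselI ν x = ∑' k, besselITerm ν x k := rfl

section BesselI

variable {ν a x w : ℝ}

lemma besselITerm_nonneg (hν : -1 < ν) (hx : 0 < x) (k : ℕ) : 0 ≤ besselITerm ν x k := by
  have hG := Real.Gamma_pos_of_pos (show 0 < ν + k + 1 by linarith [k.cast_nonneg (α := ℝ)])
  unfold besselITerm
  positivity

lemma besselITerm_mul (ha : 0 ≤ a) (hx : 0 < x) (k : ℕ) :
    besselITerm ν (a * x) k = besselITerm ν a k * x ^ (ν + 2 * (k : ℝ)) := by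
  rw [besselITerm, besselITerm, mul_div_right_comm, Real.mul_rpow (by positivity) hx.le,
    mul_div_right_comm]

lemma ofReal_besselITerm (hν : -1 < ν) (hx : 0 < x) (k : ℕ) :
    (besselITerm ν x k : ℂ) = ((x ^ ν / Real.Gamma (ν + 1) : ℝ) : ℂ) / ((2 ^ ν : ℝ) : ℂ) *
      ((x ^ 2 / 4 : ℂ) ^ k / k.factorial / (ascPochhammer ℂ k).eval (ν + 1 : ℂ)) := by
  have hG : Complex.Gamma (ν + k + 1) =
      Complex.Gamma (ν + 1) * (ascPochhammer ℂ k).eval (ν + 1 : ℂ) := by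
    rw [← Gamma_add_natCast_eq_mul_ascPochhammer (by simp; linarith)]
    ring_nf
  have hpow : (x / 2) ^ (ν + 2 * (k : ℝ)) = x ^ ν / 2 ^ ν * (x ^ 2 / 4) ^ k := by
    rw [Real.rpow_add (by positivity), Real.div_rpow hx.le zero_le_two,
      Real.rpow_mul (by positivity), Real.rpow_natCast, Real.rpow_two]
    ring
  rw [besselITerm, hpow]
  push_cast [← Complex.Gamma_ofReal]
  rw [hG]
  ring

/-- Split each term as `(x/2)^k / k!`, which sums to `exp (x/2)`, times `(x/2)^(ν+k) / Γ(ν+k+1)`,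
which the Gamma integral bounds uniformly in `k`. -/
lemma besselITerm_le (hν : -1 < ν) (hw : 0 < w) (hwx : w ^ 2 + w ≤ x / 2) (k : ℕ) :
    besselITerm ν x k ≤ Real.exp (1 + x / 2) / w * ((x / 2) ^ k / k.factorial) := by
  have hx : 0 < x / 2 := by nlinarith
  have hνk : -1 < ν + k := by linarith [k.cast_nonneg (α := ℝ)]
  have hG := Real.Gamma_pos_of_pos (show 0 < ν + k + 1 by linarith)
  have hfactor : (x / 2) ^ (ν + k) / Real.Gamma (ν + k + 1) ≤ Real.exp (1 + x / 2) / w := by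
    have h := mul_rpow_mul_exp_neg_le_Gamma hνk hw hwx
    rw [Real.exp_neg, ← mul_assoc, ← div_eq_mul_inv, div_le_iff₀ (Real.exp_pos _)] at h
    rw [div_le_div_iff₀ hG hw, Real.exp_add]
    linarith
  calc besselITerm ν x k
    _ = (x / 2) ^ (ν + k) / Real.Gamma (ν + k + 1) * ((x / 2) ^ k / k.factorial) := by
        rw [besselITerm, two_mul, ← add_assoc, Real.rpow_add hx, Real.rpow_natCast]
        ring
    _ ≤ _ := by gcongr

lemma summable_besselITerm (hν : -1 < ν) (hx : 0 < x) : Summable (besselITerm ν x) := by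
  obtain ⟨w, hw, hwx⟩ := exists_pos_sq_add_self_le (half_pos hx)
  exact .of_nonneg_of_le (besselITerm_nonneg hν hx) (besselITerm_le hν hw hwx)
    ((Real.summable_pow_div_factorial _).mul_left _)

lemma besselI_nonneg (hν : -1 < ν) (hx : 0 < x) : 0 ≤ besselI ν x :=
  tsum_nonneg (besselITerm_nonneg hν hx)

lemma besselI_le (hν : -1 < ν) (hw : 0 < w) (hwx : w ^ 2 + w ≤ x / 2) :
    besselI ν x ≤ Real.exp (1 + x) / w := by
  have hx : 0 < x := by nlinarith
  calc besselI ν x ≤ ∑' k : ℕ, Real.exp (1 + x / 2) / w * ((x / 2) ^ k / k.factorial) :=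
        (summable_besselITerm hν hx).tsum_le_tsum (besselITerm_le hν hw hwx)
          ((Real.summable_pow_div_factorial _).mul_left _)
    _ = Real.exp (1 + x / 2) / w * Real.exp (x / 2) := by
        rw [tsum_mul_left, Real.exp_eq_exp_ℝ, NormedSpace.exp_eq_tsum_div]
    _ = Real.exp (1 + x) / w := by
        rw [div_mul_eq_mul_div, ← Real.exp_add]
        ring_nf

lemma besselI_mul_le_of_le_one (hν : -1 < ν) (ha : 0 < a) (hx : 0 < x) (hx1 : x ≤ 1) :
    besselI ν (a * x) ≤ besselI ν a * x ^ ν := by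
  rw [besselI_eq_tsum, besselI_eq_tsum, ← tsum_mul_right]
  refine (summable_besselITerm hν (mul_pos ha hx)).tsum_le_tsum (fun k => ?_)
    ((summable_besselITerm hν ha).mul_right _)
  rw [besselITerm_mul ha.le hx]
  exact mul_le_mul_of_nonneg_left
    (Real.rpow_le_rpow_of_exponent_ge hx hx1 (le_add_of_nonneg_right (by positivity)))
    (besselITerm_nonneg hν ha k)

lemma exists_besselI_mul_le_exp_mul_rpow (ha : 0 < a) :
    ∃ C : ℝ, ∀ ν : ℝ, -1 < ν → ∀ x : ℝ, 1 ≤ x →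
      besselI ν (a * x) ≤ C * (Real.exp (a * x) * x ^ (-(1 / 2) : ℝ)) := by
  obtain ⟨c, hc, hca⟩ := exists_pos_sq_add_self_le (half_pos ha)
  refine ⟨Real.exp 1 / c, fun ν hν x hx => ?_⟩
  have hx0 : 0 < x := by linarith
  have hsqrt : √x ≤ x := Real.sqrt_le_self_iff.mpr (.inr hx)
  have hw : (c * √x) ^ 2 + c * √x ≤ a * x / 2 := by
    rw [mul_pow, Real.sq_sqrt hx0.le]
    nlinarith
  calc besselI ν (a * x) ≤ Real.exp (1 + a * x) / (c * √x) := besselI_le hν (by positivity) hw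
    _ = _ := by
      rw [Real.exp_add, Real.rpow_neg hx0.le, ← Real.sqrt_eq_rpow]
      field_simp

lemma aemeasurable_besselI_mul (hν : -1 < ν) (ha : 0 < a) :
    AEMeasurable (fun x => besselI ν (a * x)) (volume.restrict (Set.Ioi 0)) := by
  refine aemeasurable_of_tendsto_metrizable_ae'
    (f := fun N x => ∑ k ∈ Finset.range N, besselITerm ν (a * x) k) (fun N => ?_) ?_
  · unfold besselITerm
    fun_prop
  · refine (ae_restrict_mem measurableSet_Ioi).mono fun x hx => ?_
    exact (summable_besselITerm hν (mul_pos ha hx)).hasSum.tendsto_sum_nat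

end BesselI

lemma hasSum_pi_prod_of_nonneg {ι κ : Type*} [Fintype ι] {f : ι → κ → ℝ} {c : ι → ℝ}
    (hf : ∀ j k, 0 ≤ f j k) (hsum : ∀ j, HasSum (f j) (c j)) :
    HasSum (fun n : ι → κ => ∏ j, f j (n j)) (∏ j, c j) := by
  classical
  have hbox : Filter.Tendsto (fun s : Finset κ => Fintype.piFinset fun _ : ι => s)
      Filter.atTop Filter.atTop := by
    refine Filter.tendsto_atTop_finset_of_monotone
      (fun s t hst => Fintype.piFinset_subset _ _ fun _ => hst) fun n => ⟨univ.image n, ?_⟩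
    simp
  have hlim : Filter.Tendsto (fun s : Finset κ => ∑ n ∈ Fintype.piFinset fun _ : ι => s,
      ∏ j, f j (n j)) Filter.atTop (nhds (∏ j, c j)) := by
    simp_rw [← Finset.prod_univ_sum]
    exact tendsto_finsetProd _ fun j _ => hsum j
  have hnonneg (n : ι → κ) : 0 ≤ ∏ j, f j (n j) := prod_nonneg fun j _ => hf j (n j)
  have hmono : Monotone fun s : Finset (ι → κ) => ∑ n ∈ s, ∏ j, f j (n j) :=
    Finset.sum_mono_set_of_nonneg hnonneg
  exact (tendsto_iff_tendsto_subseq_of_monotone hmono hbox).mpr hlim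

lemma integrableOn_Ioi_one_rpow_mul_exp_neg_mul {s b : ℝ} (hb : 0 ≤ b) (hs : b = 0 → s < -1) :
    IntegrableOn (fun x : ℝ => x ^ s * Real.exp (-b * x)) (Set.Ioi 1) := by
  rcases hb.eq_or_lt with rfl | hb
  · simpa using integrableOn_Ioi_rpow_of_lt (hs rfl) one_pos
  · have habs : IntegrableOn (fun x : ℝ => x ^ |s| * Real.exp (-b * x)) (Set.Ioi 1) := by
      have h := integrableOn_rpow_mul_exp_neg_mul_rpow (neg_one_lt_zero.trans_le (abs_nonneg s))
        one_pos hb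
      simp only [Real.rpow_one] at h
      exact h.mono_set (Set.Ioi_subset_Ioi zero_le_one)
    refine habs.mono' (by fun_prop) ?_
    refine (ae_restrict_mem measurableSet_Ioi).mono fun x hx => ?_
    have hx0 : 0 < x := one_pos.trans hx
    rw [Real.norm_of_nonneg (by positivity)]
    gcongr
    exacts [le_of_lt hx, le_abs_self s]

section Laplace

variable {ι : Type*} [Fintype ι] {ν a : ι → ℝ} {p : ℝ} {lam : ℂ}

/-- The term of multi-index `n` of the Lauricella series `F_C(α, β; γ; z)`, with one lower
parameter `γ j` and one variable `z j` for each `j : ι`. -/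
noncomputable def lauricellaFCTerm (α β : ℂ) (γ z : ι → ℂ) (n : ι → ℕ) : ℂ :=
  (ascPochhammer ℂ (∑ j, n j)).eval α * (ascPochhammer ℂ (∑ j, n j)).eval β /
    (∏ j, (ascPochhammer ℂ (n j)).eval (γ j)) * ∏ j, z j ^ n j / ((n j).factorial : ℂ)

/-- The integrand `e^{-px} x^λ ∏_j I_{ν_j}(a_j x)` of the Laplace transform, with the factors of
the product indexed by an arbitrary finite type. -/
noncomputable def besselLaplaceIntegrand (ν a : ι → ℝ) (p : ℝ) (lam : ℂ) (x : ℝ) : ℂ :=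
  Complex.exp (-(p : ℂ) * x) * (x : ℂ) ^ lam * ∏ j, (besselI (ν j) (a j * x) : ℂ)

/-- The factor `Γ(λ+ν+1) / (2^ν p^{λ+ν+1}) · ∏_j a_j^{ν_j} / Γ(ν_j+1)`, with `ν = ∑ ν_j`, in front
of the Lauricella series in the Laplace transform. -/
noncomputable def besselLaplacePrefactor (ν a : ι → ℝ) (p : ℝ) (lam : ℂ) : ℂ :=
  Complex.Gamma (lam + (∑ j, ν j : ℝ) + 1) /
      ((2 : ℂ) ^ ((∑ j, ν j : ℝ) : ℂ) * (p : ℂ) ^ (lam + (∑ j, ν j : ℝ) + 1)) *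
    ∏ j, ((a j ^ ν j / Real.Gamma (ν j + 1) : ℝ) : ℂ)

lemma norm_exp_neg_mul_mul_cpow {x : ℝ} (hx : 0 < x) :
    ‖Complex.exp (-(p : ℂ) * x) * (x : ℂ) ^ lam‖ = Real.exp (-p * x) * x ^ lam.re := by
  rw [norm_mul, Complex.norm_cpow_eq_rpow_re_of_pos hx, Complex.norm_exp]
  simp

lemma norm_besselLaplaceIntegrand_le {x : ℝ} {b : ι → ℝ} (hν : ∀ j, -1 < ν j) (ha : ∀ j, 0 < a j)
    (hx : 0 < x) (hb : ∀ j, besselI (ν j) (a j * x) ≤ b j) :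
    ‖besselLaplaceIntegrand ν a p lam x‖ ≤ Real.exp (-p * x) * x ^ lam.re * ∏ j, b j := by
  have hnonneg (j : ι) : 0 ≤ besselI (ν j) (a j * x) := besselI_nonneg (hν j) (mul_pos (ha j) hx)
  rw [besselLaplaceIntegrand, norm_mul, norm_exp_neg_mul_mul_cpow hx, ← Complex.ofReal_prod,
    Complex.norm_real, Real.norm_of_nonneg (prod_nonneg fun j _ => hnonneg j)]
  gcongr with j
  exacts [fun j _ => hnonneg j, hb j]

lemma aestronglyMeasurable_besselLaplaceIntegrand (hν : ∀ j, -1 < ν j) (ha : ∀ j, 0 < a j) :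
    AEStronglyMeasurable (besselLaplaceIntegrand ν a p lam) (volume.restrict (Set.Ioi 0)) := by
  refine (AEMeasurable.mul (by fun_prop) ?_).aestronglyMeasurable
  exact Finset.aemeasurable_fun_prod _ fun j _ =>
    Complex.measurable_ofReal.comp_aemeasurable (aemeasurable_besselI_mul (hν j) (ha j))

lemma integrableOn_Ioc_besselLaplaceIntegrand (hν : ∀ j, -1 < ν j) (ha : ∀ j, 0 < a j)
    (hp : 0 ≤ p) (hlam : -1 < lam.re + ∑ j, ν j) :
    IntegrableOn (besselLaplaceIntegrand ν a p lam) (Set.Ioc 0 1) := by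
  have hbound : IntegrableOn
      (fun x : ℝ => (∏ j, besselI (ν j) (a j)) * x ^ (lam.re + ∑ j, ν j)) (Set.Ioc 0 1) :=
    (intervalIntegral.intervalIntegrable_rpow' hlam).1.const_mul _
  refine hbound.mono'
    ((aestronglyMeasurable_besselLaplaceIntegrand hν ha).mono_set Set.Ioc_subset_Ioi_self) ?_
  refine (ae_restrict_mem measurableSet_Ioc).mono fun x ⟨hx, hx1⟩ => ?_
  have hexp : Real.exp (-p * x) ≤ 1 := Real.exp_le_one_iff.mpr (by nlinarith)
  have hI : 0 ≤ ∏ j, besselI (ν j) (a j) := prod_nonneg fun j _ => besselI_nonneg (hν j) (ha j)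
  calc ‖besselLaplaceIntegrand ν a p lam x‖
    _ ≤ Real.exp (-p * x) * x ^ lam.re * ∏ j, besselI (ν j) (a j) * x ^ ν j :=
        norm_besselLaplaceIntegrand_le hν ha hx fun j =>
          besselI_mul_le_of_le_one (hν j) (ha j) hx hx1
    _ = Real.exp (-p * x) * ((∏ j, besselI (ν j) (a j)) * x ^ (lam.re + ∑ j, ν j)) := by
        rw [prod_mul_distrib, ← Real.rpow_sum_of_pos hx, Real.rpow_add hx]
        ring
    _ ≤ (∏ j, besselI (ν j) (a j)) * x ^ (lam.re + ∑ j, ν j) :=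
        mul_le_of_le_one_left (by positivity) hexp

lemma integrableOn_Ioi_one_besselLaplaceIntegrand (hν : ∀ j, -1 < ν j) (ha : ∀ j, 0 < a j)
    (hap : ∑ j, a j ≤ p) (hlam : ∑ j, a j = p → lam.re < (Fintype.card ι : ℝ) / 2 - 1) :
    IntegrableOn (besselLaplaceIntegrand ν a p lam) (Set.Ioi 1) := by
  choose C hC using fun j => exists_besselI_mul_le_exp_mul_rpow (ha j)
  have hbound : IntegrableOn (fun x : ℝ => (∏ j, C j) *
      (x ^ (lam.re - Fintype.card ι / 2) * Real.exp (-(p - ∑ j, a j) * x))) (Set.Ioi 1) :=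
    (integrableOn_Ioi_one_rpow_mul_exp_neg_mul (sub_nonneg.mpr hap) fun h => by
      linarith [hlam (sub_eq_zero.mp h).symm]).const_mul _
  refine hbound.mono' ((aestronglyMeasurable_besselLaplaceIntegrand hν ha).mono_set
    (Set.Ioi_subset_Ioi zero_le_one)) ?_
  refine (ae_restrict_mem measurableSet_Ioi).mono fun x (hx : 1 < x) => ?_
  have hx0 : 0 < x := one_pos.trans hx
  calc ‖besselLaplaceIntegrand ν a p lam x‖
    _ ≤ Real.exp (-p * x) * x ^ lam.re *
          ∏ j, C j * (Real.exp (a j * x) * x ^ (-(1 / 2) : ℝ)) :=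
        norm_besselLaplaceIntegrand_le hν ha hx0 fun j => hC j (ν j) (hν j) x hx.le
    _ = (∏ j, C j) * ((x ^ lam.re * x ^ (-(1 / 2) * Fintype.card ι : ℝ)) *
          (Real.exp (-p * x) * Real.exp ((∑ j, a j) * x))) := by
        rw [prod_mul_distrib, prod_mul_distrib, ← Real.exp_sum, ← sum_mul, prod_const, card_univ,
          ← Real.rpow_mul_natCast hx0.le]
        ring
    _ = _ := by
        rw [← Real.rpow_add hx0, ← Real.exp_add]
        ring_nf

lemma integrableOn_besselLaplaceIntegrand (hν : ∀ j, -1 < ν j) (ha : ∀ j, 0 < a j)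
    (hap : ∑ j, a j ≤ p) (hlam : -1 < lam.re + ∑ j, ν j)
    (hlam' : ∑ j, a j = p → lam.re < (Fintype.card ι : ℝ) / 2 - 1) :
    IntegrableOn (besselLaplaceIntegrand ν a p lam) (Set.Ioi 0) := by
  have hp : 0 ≤ p := (sum_nonneg fun j _ => (ha j).le).trans hap
  rw [← Set.Ioc_union_Ioi_eq_Ioi zero_le_one]
  exact (integrableOn_Ioc_besselLaplaceIntegrand hν ha hp hlam).union
    (integrableOn_Ioi_one_besselLaplaceIntegrand hν ha hap hlam')

lemma hasSum_prod_besselITerm {x : ℝ} (hν : ∀ j, -1 < ν j) (ha : ∀ j, 0 < a j) (hx : 0 < x) :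
    HasSum (fun n : ι → ℕ => ∏ j, besselITerm (ν j) (a j * x) (n j))
      (∏ j, besselI (ν j) (a j * x)) :=
  hasSum_pi_prod_of_nonneg (fun j => besselITerm_nonneg (hν j) (mul_pos (ha j) hx))
    fun j => (summable_besselITerm (hν j) (mul_pos (ha j) hx)).hasSum

lemma prod_besselITerm_mul {x : ℝ} (ha : ∀ j, 0 < a j) (hx : 0 < x) (n : ι → ℕ) :
    ∏ j, besselITerm (ν j) (a j * x) (n j) =
      (∏ j, besselITerm (ν j) (a j) (n j)) * x ^ (∑ j, ν j + (2 * ∑ j, n j : ℕ)) := by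
  simp_rw [besselITerm_mul (ha _).le hx, prod_mul_distrib]
  rw [← Real.rpow_sum_of_pos hx, sum_add_distrib, ← mul_sum]
  push_cast
  rfl

lemma ofReal_prod_besselITerm (hν : ∀ j, -1 < ν j) (ha : ∀ j, 0 < a j) (n : ι → ℕ) :
    ((∏ j, besselITerm (ν j) (a j) (n j) : ℝ) : ℂ) =
      (∏ j, ((a j ^ ν j / Real.Gamma (ν j + 1) : ℝ) : ℂ)) / 2 ^ ((∑ j, ν j : ℝ) : ℂ) *
        ((∏ j, (a j ^ 2 / 4 : ℂ) ^ n j / (n j).factorial) /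
          ∏ j, (ascPochhammer ℂ (n j)).eval (ν j + 1 : ℂ)) := by
  have htwo : (2 : ℂ) ^ ((∑ j, ν j : ℝ) : ℂ) = ∏ j, ((2 ^ ν j : ℝ) : ℂ) := by
    rw [← Complex.ofReal_prod, ← Real.rpow_sum_of_pos two_pos, Complex.ofReal_cpow zero_le_two,
      Complex.ofReal_ofNat]
  rw [Complex.ofReal_prod, htwo]
  simp_rw [ofReal_besselITerm (hν _) (ha _), prod_mul_distrib, prod_div_distrib]

lemma integral_exp_mul_cpow_mul_prod_besselITerm (hν : ∀ j, -1 < ν j) (ha : ∀ j, 0 < a j)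
    (hp : 0 < p) (hlam : -1 < lam.re + ∑ j, ν j) (n : ι → ℕ) :
    ∫ x in Set.Ioi (0 : ℝ), Complex.exp (-(p : ℂ) * x) * (x : ℂ) ^ lam *
        ((∏ j, besselITerm (ν j) (a j * x) (n j) : ℝ) : ℂ) =
      besselLaplacePrefactor ν a p lam *
        lauricellaFCTerm ((lam + (∑ j, ν j : ℝ) + 1) / 2) ((lam + (∑ j, ν j : ℝ)) / 2 + 1)
          (fun j => ν j + 1) (fun j => a j ^ 2 / p ^ 2) n := by
  set s : ℂ := lam + (∑ j, ν j : ℝ) + 1 with hs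
  set N := ∑ j, n j with hN
  have hsre : 0 < s.re := by
    rw [hs, Complex.add_re, Complex.add_re, Complex.ofReal_re, Complex.one_re]
    linarith
  have hsum : (lam + (∑ j, ν j : ℝ)) / 2 + 1 = (s + 1) / 2 := by
    rw [hs]
    ring
  have hscale : 4 ^ N / (p : ℂ) ^ (2 * N) * ∏ j, (a j ^ 2 / 4 : ℂ) ^ n j / (n j).factorial =
      ∏ j, (a j ^ 2 / p ^ 2 : ℂ) ^ n j / (n j).factorial := by
    rw [pow_mul, ← div_pow, hN, ← prod_pow_eq_pow_sum, ← prod_mul_distrib]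
    refine prod_congr rfl fun j _ => ?_
    rw [← mul_div_assoc, ← mul_pow]
    ring_nf
  calc _ = ∫ x in Set.Ioi (0 : ℝ), ((∏ j, besselITerm (ν j) (a j) (n j) : ℝ) : ℂ) *
        ((x : ℂ) ^ (s + (2 * N : ℕ) - 1) * Complex.exp (-(p * x))) := by
        refine setIntegral_congr_fun measurableSet_Ioi fun x (hx : 0 < x) => ?_
        have hexponent : s + (2 * N : ℕ) - 1 = lam + ((∑ j, ν j + (2 * N : ℕ) : ℝ) : ℂ) := by
          rw [hs]
          push_cast
          ring
        rw [prod_besselITerm_mul ha hx, Complex.ofReal_mul, Complex.ofReal_cpow hx.le, hexponent,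
          Complex.cpow_add _ _ (Complex.ofReal_ne_zero.mpr hx.ne'), neg_mul]
        ring
    _ = _ := by
        rw [integral_const_mul, integral_cpow_add_natCast_mul_exp_neg_mul_Ioi hsre hp,
          ofReal_prod_besselITerm hν ha, eval_ascPochhammer_two_mul, hsum, besselLaplacePrefactor,
          lauricellaFCTerm, ← hscale]
        ring

lemma hasSum_lauricellaFCTerm_integral_besselLaplaceIntegrand (hν : ∀ j, -1 < ν j)
    (ha : ∀ j, 0 < a j) (hp : 0 < p) (hlam : -1 < lam.re + ∑ j, ν j)
    (hint : IntegrableOn (besselLaplaceIntegrand ν a p lam) (Set.Ioi 0)) :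
    HasSum (fun n : ι → ℕ => besselLaplacePrefactor ν a p lam *
        lauricellaFCTerm ((lam + (∑ j, ν j : ℝ) + 1) / 2) ((lam + (∑ j, ν j : ℝ)) / 2 + 1)
          (fun j => ν j + 1) (fun j => a j ^ 2 / p ^ 2) n)
      (∫ x in Set.Ioi 0, besselLaplaceIntegrand ν a p lam x) := by
  simp_rw [← integral_exp_mul_cpow_mul_prod_besselITerm hν ha hp hlam]
  set f : (ι → ℕ) → ℝ → ℂ := fun n x => Complex.exp (-(p : ℂ) * x) * (x : ℂ) ^ lam *
    ((∏ j, besselITerm (ν j) (a j * x) (n j) : ℝ) : ℂ) with hf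
  have hsum (x : ℝ) (hx : 0 < x) :
      HasSum (fun n => f n x) (besselLaplaceIntegrand ν a p lam x) := by
    rw [besselLaplaceIntegrand, ← Complex.ofReal_prod]
    exact (Complex.hasSum_ofReal.mpr (hasSum_prod_besselITerm hν ha hx)).mul_left _
  have hnorm (x : ℝ) (hx : 0 < x) :
      HasSum (fun n => ‖f n x‖) ‖besselLaplaceIntegrand ν a p lam x‖ := by
    have h := hasSum_prod_besselITerm hν ha hx
    have hnonneg (n : ι → ℕ) : 0 ≤ ∏ j, besselITerm (ν j) (a j * x) (n j) :=
      prod_nonneg fun j _ => besselITerm_nonneg (hν j) (mul_pos (ha j) hx) _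
    simp_rw [hf, besselLaplaceIntegrand, ← Complex.ofReal_prod, norm_mul _ (Complex.ofReal _),
      Complex.norm_real, Real.norm_of_nonneg (hnonneg _), Real.norm_of_nonneg (h.nonneg hnonneg)]
    exact h.mul_left _
  have hae {P : ℝ → Prop} (h : ∀ x, 0 < x → P x) : ∀ᵐ x ∂volume.restrict (Set.Ioi 0), P x :=
    (ae_restrict_mem measurableSet_Ioi).mono h
  refine hasSum_integral_of_dominated_convergence (fun n x => ‖f n x‖) (fun n => ?_)
    (fun n => .of_forall fun x => le_rfl) (hae fun x hx => (hnorm x hx).summable) ?_ (hae hsum)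
  · refine Measurable.aestronglyMeasurable ?_
    simp only [besselITerm]
    fun_prop
  · exact hint.norm.congr (hae fun x hx => (hnorm x hx).tsum_eq.symm)

theorem laplace_transform_prod_besselI_boundary_general (hν : ∀ j, -1 < ν j)
    (ha : ∀ j, 0 < a j) (hp : 0 < p) (hap : ∑ j, a j ≤ p) (hlam : -1 < lam.re + ∑ j, ν j)
    (hlam' : ∑ j, a j = p → lam.re < (Fintype.card ι : ℝ) / 2 - 1) :
    IntegrableOn (besselLaplaceIntegrand ν a p lam) (Set.Ioi 0) ∧
    HasSum (fun n : ι → ℕ => besselLaplacePrefactor ν a p lam *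
        lauricellaFCTerm ((lam + (∑ j, ν j : ℝ) + 1) / 2) ((lam + (∑ j, ν j : ℝ)) / 2 + 1)
          (fun j => ν j + 1) (fun j => a j ^ 2 / p ^ 2) n)
      (∫ x in Set.Ioi 0, besselLaplaceIntegrand ν a p lam x) :=
  have hint := integrableOn_besselLaplaceIntegrand hν ha hap hlam hlam'
  ⟨hint, hasSum_lauricellaFCTerm_integral_besselLaplaceIntegrand hν ha hp hlam hint⟩

end Laplace

/-- Corrected Laplace transform formula (boundary case `p = a₁ + ⋯ + a_d`, `Re λ < d/2 - 1`):
`∫₀^∞ e^{-px} x^λ ∏_j I_{ν_j}(a_j x) dx = Γ(λ+ν+1)/(2^ν p^{λ+ν+1}) ⬝ ∏_j a_j^{ν_j}/Γ(ν_j+1)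
  ⬝ F_C^{(d)}((λ+ν+1)/2, (λ+ν)/2+1; ν₁+1, …, ν_d+1; a₁²/p², …, a_d²/p²)`,
with the integral converging absolutely. -/
theorem laplace_transform_prod_besselI_boundary (d : ℕ) (hd : 0 < d) (ν : Fin d → ℝ)
    (hν : ∀ j, -1 < ν j) (lam : ℂ) (hl : -1 < lam.re + ∑ j, ν j)
    (a : Fin d → ℝ) (ha : ∀ j, 0 < a j) (p : ℝ) (hp : p = ∑ j, a j) (hl2 : lam.re < (d : ℝ) / 2 - 1) :
    IntegrableOn
      (fun x : ℝ => Complex.exp (-(p : ℂ) * x) * (x : ℂ) ^ lam *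
        ∏ j, (besselI (ν j) (a j * x) : ℂ)) (Set.Ioi 0) ∧
    (∫ x in Set.Ioi (0 : ℝ), Complex.exp (-(p : ℂ) * x) * (x : ℂ) ^ lam *
        ∏ j, (besselI (ν j) (a j * x) : ℂ)) =
      Complex.Gamma (lam + (∑ j, ν j : ℝ) + 1) /
          ((2 : ℂ) ^ ((∑ j, ν j : ℝ) : ℂ) * (p : ℂ) ^ (lam + (∑ j, ν j : ℝ) + 1)) *
        (∏ j, ((a j ^ (ν j) / Real.Gamma (ν j + 1) : ℝ) : ℂ)) *
        ∑' n : Fin d → ℕ,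
          (ascPochhammer ℂ (∑ j, n j)).eval ((lam + (∑ j, ν j : ℝ) + 1) / 2) *
            (ascPochhammer ℂ (∑ j, n j)).eval ((lam + (∑ j, ν j : ℝ)) / 2 + 1) /
            (∏ j, (((ascPochhammer ℝ (n j)).eval (ν j + 1) : ℝ) : ℂ)) *
            ∏ j, (((a j ^ 2 / p ^ 2 : ℝ) : ℂ) ^ (n j) / ((n j).factorial : ℂ)) := by
  have : Nonempty (Fin d) := ⟨⟨0, hd⟩⟩
  obtain ⟨hint, hsum⟩ := laplace_transform_prod_besselI_boundary_general hν ha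
    (hp ▸ sum_pos (fun j _ => ha j) univ_nonempty) hp.ge hl fun _ => by simpa using hl2
  refine ⟨hint, ?_⟩
  rw [← tsum_mul_left]
  refine hsum.tsum_eq.symm.trans (tsum_congr fun n => ?_)
  simp [besselLaplacePrefactor, lauricellaFCTerm, ofReal_eval_ascPochhammer]
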